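/- For every subset Y of Pof: G(Y) ∩ Pof = Y^S, and G(Y) ∩ Pof** = (Y^S)**. -/

import Mathlib

/- Formalization of quasi-polyadic equality set algebras over the weak space
   `V = {s : α → ℚ | s i ≠ 0 for finitely many i}`, where the infinite ordinal α
   is formalized as an infinite type. -/

open scoped Classical

namespace QPEA

variable {α : Type*}

/-- The weak space `V = ^αℚ^(0)`: functions with finite support. -/
def W (α : Type*) : Set (α → ℚ) := {s | {i | s i ≠ 0}.Finite}

/-- Cylindrification `c_i`. -/
def cyl (i : α) (X : Set (α → ℚ)) : Set (α → ℚ) :=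
  {s | s ∈ W α ∧ ∃ t ∈ X, ∀ j, j ≠ i → t j = s j}

/-- Diagonal element `d_ij`. -/
def diag (i j : α) : Set (α → ℚ) := {s | s ∈ W α ∧ s i = s j}

/-- Transposition substitution `s_[i,j]`. -/
noncomputable def sub (i j : α) (X : Set (α → ℚ)) : Set (α → ℚ) :=
  {s | s ∈ W α ∧ (s ∘ Equiv.swap i j) ∈ X}

/-- Membership in the subalgebra of the full quasi-polyadic equality set algebra `C`
    (with unit `V = W α`) generated by `S`. -/
inductive SgMem (S : Set (Set (α → ℚ))) : Set (α → ℚ) → Prop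
  | base {x : Set (α → ℚ)} : x ∈ S → SgMem S x
  | empty : SgMem S ∅
  | top : SgMem S (W α)
  | dgnl (i j : α) : SgMem S (diag i j)
  | union {x y : Set (α → ℚ)} : SgMem S x → SgMem S y → SgMem S (x ∪ y)
  | compl {x : Set (α → ℚ)} : SgMem S x → SgMem S (W α \ x)
  | cylin (i : α) {x : Set (α → ℚ)} : SgMem S x → SgMem S (cyl i x)
  | subst (i j : α) {x : Set (α → ℚ)} : SgMem S x → SgMem S (sub i j x)

/-- The subalgebra `Sg^C S` of `C` generated by `S`. -/
def Sg (S : Set (Set (α → ℚ))) : Set (Set (α → ℚ)) := {x | SgMem S x}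

/-- The element `[t, r] = {s ∈ V | t = Σ_i r_i s_i}`. -/
noncomputable def poly (t : ℚ) (r : α → ℚ) : Set (α → ℚ) :=
  {s | s ∈ W α ∧ t = ∑ᶠ i, r i * s i}

/-- `a_m = [m, 1]` where `1` is the constantly-one sequence. -/
noncomputable def aElem (m : ℕ) : Set (α → ℚ) := poly (m : ℚ) (fun _ => 1)

/-- `r ∈ ^αℚ^(0) ∪ ^αℚ^(1)`. -/
def weak01 (r : α → ℚ) : Prop := {i | r i ≠ 0}.Finite ∨ {i | r i ≠ 1}.Finite

/-- `Pol = {[t,r] : r ∈ ^αℚ^(0) ∪ ^αℚ^(1)}`. -/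
def Pol (α : Type*) : Set (Set (α → ℚ)) :=
  {X | ∃ t r, weak01 r ∧ X = poly t r}

/-- `Po = {[t,r] ∈ Pol : 0 ∈ range r} ∪ {d_ij : i ≠ j}`. -/
def Po (α : Type*) : Set (Set (α → ℚ)) :=
  {X | ∃ t r, weak01 r ∧ (∃ i, r i = 0) ∧ X = poly t r} ∪
    {X | ∃ i j : α, i ≠ j ∧ X = diag i j}

/-- `Pof = {[t, 1] : t ∈ ℚ}`. -/
def Pof (α : Type*) : Set (Set (α → ℚ)) := {X | ∃ t : ℚ, X = poly t (fun _ => 1)}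

/-- `X^S = {s_[i,j] x : x ∈ X, i, j < α}`. -/
def sClose (X : Set (Set (α → ℚ))) : Set (Set (α → ℚ)) :=
  {y | ∃ x ∈ X, ∃ i j : α, y = sub i j x}

/-- `X*`: finite intersections of elements of `X` and complements (rel. `V`) of
    elements of `X` (the empty intersection being `V`). -/
def star (X : Set (Set (α → ℚ))) : Set (Set (α → ℚ)) :=
  {p | ∃ (n : ℕ) (f : Fin n → Set (α → ℚ)),
      (∀ i, f i ∈ X ∨ ∃ q ∈ X, f i = W α \ q) ∧ p = W α ∩ ⋂ i, f i}

/-- `X**`: finite unions of elements of `X*` (the empty union being `∅`);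
    the Boolean subalgebra of `℘(V)` generated by `X`. -/
def dstar (X : Set (Set (α → ℚ))) : Set (Set (α → ℚ)) :=
  {p | ∃ (n : ℕ) (f : Fin n → Set (α → ℚ)), (∀ i, f i ∈ star X) ∧ p = ⋃ i, f i}

/-- `G(Y) = (Y^S ∪ Po)**`. -/
def G (Y : Set (Set (α → ℚ))) : Set (Set (α → ℚ)) := dstar (sClose Y ∪ Po α)

/-- `Poz`: elements of `G(Pol)` covered by finitely many elements of `Po`. -/
def Poz (α : Type*) : Set (Set (α → ℚ)) :=
  {x | x ∈ G (Pol α) ∧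
    ∃ (n : ℕ) (p : Fin n → Set (α → ℚ)), (∀ i, p i ∈ Po α) ∧ x ⊆ ⋃ i, p i}

/-- `Neg = G(∅) ∖ Poz`. -/
def Neg (α : Type*) : Set (Set (α → ℚ)) := G (∅ : Set (Set (α → ℚ))) \ Poz α

/-- An ideal of a subalgebra `B` of `C`: a nonempty subset of `B`, downward closed
    in `B`, closed under `∪`, and closed under the operations `c_i` and `s_[i,j]`. -/
def IsIdeal (B I : Set (Set (α → ℚ))) : Prop :=
  I.Nonempty ∧ I ⊆ B ∧
    (∀ x ∈ I, ∀ y ∈ B, y ⊆ x → y ∈ I) ∧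
    (∀ x ∈ I, ∀ y ∈ I, x ∪ y ∈ I) ∧
    (∀ x ∈ I, ∀ i : α, cyl i x ∈ I) ∧
    (∀ x ∈ I, ∀ i j : α, sub i j x ∈ I)

/-- `B` is simple: every ideal of `B` equals `{∅}` or all of `B`. -/
def Simple (B : Set (Set (α → ℚ))) : Prop :=
  ∀ I : Set (Set (α → ℚ)), IsIdeal B I → I = {∅} ∨ I = B

/-- A subuniverse of `C`: contains `∅`, `V`, all diagonals, and is closed under
    `∪`, complement relative to `V`, all `c_i` and all `s_[i,j]`. -/
def IsSubuniv (B : Set (Set (α → ℚ))) : Prop :=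
  (∅ : Set (α → ℚ)) ∈ B ∧ W α ∈ B ∧ (∀ i j : α, diag i j ∈ B) ∧
    (∀ x ∈ B, ∀ y ∈ B, x ∪ y ∈ B) ∧
    (∀ x ∈ B, W α \ x ∈ B) ∧
    (∀ i : α, ∀ x ∈ B, cyl i x ∈ B) ∧
    (∀ i j : α, ∀ x ∈ B, sub i j x ∈ B)

end QPEA

open QPEA

/-!
Coordinate permutations preserve the sum of the coordinates, so `Y^S = Y` for `Y ⊆ Pof`.
An element `x` of `G(Y)` depends only on the membership of a point in finitely many members of
`Y ∪ Po`. Each member of `Po` is `∅`, `V`, or a hyperplane of `V` that is not parallel to the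
hyperplanes `[t, 1]`; since `ℚ` is infinite, every `[t, 1]` contains a point lying on none of
finitely many such hyperplanes. At these generic points only the members of `Y` can tell different
values of `t` apart, so a union `x` of hyperplanes `[t, 1]` consists of finitely many members of
`Y`, or else its complement does.
-/

theorem exists_apply_eq_forall_apply_ne {K V ι : Type*} [Field K] [Infinite K] [AddCommGroup V]
    [Module K V] [Finite ι] (φ : Module.Dual K V) (hφ : Function.Surjective φ)
    (ψ : ι → Module.Dual K V) (hψ : ∀ i, ∃ d ∈ LinearMap.ker φ, ψ i d ≠ 0) (t : K) (c : ι → K) :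
    ∃ v, φ v = t ∧ ∀ i, ψ i v ≠ c i := by
  obtain ⟨d, hd, hψd⟩ := Module.Dual.exists_forall_mem_ne_zero_of_forall_exists _ ψ hψ
  obtain ⟨v, rfl⟩ := hφ t
  -- On the line `v + q • d` each equation `ψ i = c i` excludes at most one value of `q`.
  obtain ⟨q, hq⟩ := (Set.finite_range fun i => (c i - ψ i v) / ψ i d).infinite_compl.nonempty
  refine ⟨v + q • d, by simp [LinearMap.mem_ker.1 hd], fun i hi => hq ⟨i, ?_⟩⟩
  simp only [← hi, map_add, map_smul, smul_eq_mul, add_sub_cancel_left,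
    mul_div_cancel_right₀ _ (hψd i)]

namespace QPEA

section LinearCombination

open Finsupp (linearCombination)

variable {α R M : Type*}

theorem linearCombination_eq_finsum [Semiring R] [AddCommMonoid M] [Module R M] (v : α → M)
    (f : α →₀ R) : linearCombination R v f = ∑ᶠ i, f i • v i := by
  have hsupp : (Function.support fun i => f i • v i) ⊆ f.support := fun i hi =>
    Finsupp.mem_support_iff.2 (left_ne_zero_of_smul hi)
  rw [finsum_eq_sum_of_support_subset _ hsupp, Finsupp.linearCombination_apply, Finsupp.sum]

variable [Ring R] [AddCommGroup M] [Module R M]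

theorem linearCombination_sub (v w : α → M) (f : α →₀ R) :
    linearCombination R (v - w) f = linearCombination R v f - linearCombination R w f := by
  simp only [Finsupp.linearCombination_apply, Pi.sub_apply, smul_sub, Finsupp.sum_sub]

theorem exists_mem_ker_linearCombination_one_of_ne {v : α → M} {i j : α} (h : v i ≠ v j) :
    ∃ d ∈ LinearMap.ker (linearCombination R fun _ : α => (1 : R)), linearCombination R v d ≠ 0 :=
  ⟨Finsupp.single i 1 - Finsupp.single j 1, by simp, by simpa using sub_ne_zero.2 h⟩

end LinearCombination

section BooleanClosure

variable {α : Type*} {X Y : Set (Set (α → ℚ))} {x : Set (α → ℚ)}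

theorem star_mono (h : X ⊆ Y) : star X ⊆ star Y := by
  rintro _ ⟨n, f, hf, rfl⟩
  exact ⟨n, f, fun i => (hf i).imp (@h _) fun ⟨q, hq, hfq⟩ => ⟨q, h hq, hfq⟩, rfl⟩

theorem dstar_mono (h : X ⊆ Y) : dstar X ⊆ dstar Y := by
  rintro _ ⟨n, f, hf, rfl⟩
  exact ⟨n, f, fun i => star_mono h (hf i), rfl⟩

theorem subset_W_of_mem_dstar (hx : x ∈ dstar X) : x ⊆ W α := by
  obtain ⟨n, f, hf, rfl⟩ := hx
  refine Set.iUnion_subset fun i => ?_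
  obtain ⟨m, g, -, hfg⟩ := hf i
  exact hfg ▸ Set.inter_subset_left

theorem mem_star_of_mem (hX : x ∈ X) (hW : x ⊆ W α) : x ∈ star X :=
  ⟨1, fun _ => x, fun _ => Or.inl hX, by rw [Set.iInter_const, Set.inter_eq_right.2 hW]⟩

theorem diff_iUnion_mem_star {ι : Type*} [Finite ι] {p : ι → Set (α → ℚ)} (hp : ∀ i, p i ∈ X) :
    W α \ ⋃ i, p i ∈ star X := by
  obtain ⟨n, ⟨e⟩⟩ := Finite.exists_equiv_fin ι
  refine ⟨n, fun k => W α \ p (e.symm k), fun k => Or.inr ⟨_, hp _, rfl⟩, ?_⟩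
  ext s
  simp +contextual [e.symm.forall_congr_left]

theorem iUnion_mem_dstar {ι : Type*} [Finite ι] {p : ι → Set (α → ℚ)} (hp : ∀ i, p i ∈ star X) :
    ⋃ i, p i ∈ dstar X := by
  obtain ⟨n, ⟨e⟩⟩ := Finite.exists_equiv_fin ι
  exact ⟨n, fun k => p (e.symm k), fun k => hp _, (e.symm.surjective.iUnion_comp p).symm⟩

theorem star_subset_dstar : star X ⊆ dstar X :=
  fun x hx => ⟨1, fun _ => x, fun _ => hx, (Set.iUnion_const x).symm⟩

/-- `x` is determined by the family `X` if membership of a point of `V` in `x` depends only on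
which members of `X` contain the point. -/
def DeterminedBy (X : Set (Set (α → ℚ))) (x : Set (α → ℚ)) : Prop :=
  ∀ ⦃s⦄, s ∈ W α → ∀ ⦃s'⦄, s' ∈ W α → (∀ y ∈ X, s ∈ y ↔ s' ∈ y) → (s ∈ x ↔ s' ∈ x)

theorem DeterminedBy.mono (h : X ⊆ Y) (hx : DeterminedBy X x) : DeterminedBy Y x :=
  fun _ hs _ hs' hY => hx hs hs' fun y hy => hY y (h hy)

theorem exists_finite_determinedBy_of_mem_star (hx : x ∈ star X) :
    ∃ F ⊆ X, F.Finite ∧ DeterminedBy F x := by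
  obtain ⟨n, f, hf, rfl⟩ := hx
  have hgen : ∀ k, ∃ q ∈ X, f k = q ∨ f k = W α \ q := fun k => by
    rcases hf k with h | ⟨q, hq, h⟩
    exacts [⟨_, h, Or.inl rfl⟩, ⟨q, hq, Or.inr h⟩]
  choose q hqX hfq using hgen
  refine ⟨Set.range q, Set.range_subset_iff.2 hqX, Set.finite_range q, fun s hs s' hs' h => ?_⟩
  simp only [Set.mem_inter_iff, hs, hs', true_and, Set.mem_iInter]
  refine forall_congr' fun k => ?_
  have hk : s ∈ q k ↔ s' ∈ q k := h _ ⟨k, rfl⟩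
  rcases hfq k with hfk | hfk <;> simp only [hfk, Set.mem_sdiff, hs, hs', hk]

theorem exists_finite_determinedBy_of_mem_dstar (hx : x ∈ dstar X) :
    ∃ F ⊆ X, F.Finite ∧ DeterminedBy F x := by
  obtain ⟨n, f, hf, rfl⟩ := hx
  choose F hFX hF hdet using fun i => exists_finite_determinedBy_of_mem_star (hf i)
  refine ⟨⋃ i, F i, Set.iUnion_subset hFX, Set.finite_iUnion hF, fun s hs s' hs' h => ?_⟩
  simp only [Set.mem_iUnion]
  exact exists_congr fun i => (hdet i).mono (Set.subset_iUnion F i) hs hs' h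

theorem determinedBy_of_mem_dstar (hx : x ∈ dstar X) : DeterminedBy X x := by
  obtain ⟨F, hFX, -, hF⟩ := exists_finite_determinedBy_of_mem_dstar hx
  exact hF.mono hFX

end BooleanClosure

section Hyperplanes

open Finsupp (linearCombination)

variable {α : Type*}

theorem coe_mem_W (f : α →₀ ℚ) : ⇑f ∈ W α :=
  f.hasFiniteSupport

theorem coe_mem_poly_iff {t : ℚ} {r : α → ℚ} {f : α →₀ ℚ} :
    ⇑f ∈ poly t r ↔ linearCombination ℚ r f = t := by
  simp only [linearCombination_eq_finsum, smul_eq_mul, mul_comm (f _), eq_comm (b := t)]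
  exact and_iff_right (coe_mem_W f)

theorem diag_eq_poly (i j : α) : diag i j = poly 0 (Pi.single i 1 - Pi.single j 1) := by
  ext s
  by_cases hs : s ∈ W α
  · lift s to α →₀ ℚ using hs
    rw [coe_mem_poly_iff, linearCombination_sub, Finsupp.linearCombination_single_index,
      Finsupp.linearCombination_single_index, smul_eq_mul, smul_eq_mul, mul_one, mul_one,
      sub_eq_zero]
    exact and_iff_right (coe_mem_W s)
  · exact iff_of_false (fun h => hs h.1) fun h => hs h.1

theorem exists_eq_poly_of_mem_Po {y : Set (α → ℚ)} (hy : y ∈ Po α) :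
    ∃ t r, y = poly t r ∧ (r = 0 ∨ ∃ i j, r i ≠ r j) := by
  rcases hy with ⟨t, r, -, ⟨i, hi⟩, rfl⟩ | ⟨i, j, hij, rfl⟩
  · refine ⟨t, r, rfl, or_iff_not_imp_left.2 fun hr => ?_⟩
    obtain ⟨j, hj⟩ := Function.ne_iff.1 hr
    exact ⟨j, i, hi ▸ hj⟩
  · refine ⟨0, _, diag_eq_poly i j, Or.inr ⟨i, j, ?_⟩⟩
    simpa [hij, hij.symm] using (by norm_num : (1 : ℚ) ≠ -1)

theorem sub_poly (i j : α) (t : ℚ) (r : α → ℚ) :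
    sub i j (poly t r) = poly t (r ∘ Equiv.swap i j) := by
  ext s
  refine and_congr_right fun hs => ?_
  have hW : s ∘ Equiv.swap i j ∈ W α := hs.preimage (Equiv.swap i j).injective.injOn
  have hsum : ∑ᶠ k, r k * (s ∘ Equiv.swap i j) k = ∑ᶠ k, (r ∘ Equiv.swap i j) k * s k := by
    rw [← finsum_comp_equiv (Equiv.swap i j)]
    simp only [Function.comp_apply, Equiv.swap_apply_self]
  rw [← hsum]
  exact and_iff_right hW

theorem sClose_eq_self [Nonempty α] {Y : Set (Set (α → ℚ))} (hY : Y ⊆ Pof α) : sClose Y = Y := by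
  have hsub : ∀ y ∈ Y, ∀ i j, sub i j y = y := fun y hy i j => by
    obtain ⟨t, rfl⟩ := hY hy
    exact sub_poly i j t _
  obtain ⟨i⟩ := ‹Nonempty α›
  refine Set.Subset.antisymm ?_ fun y hy => ⟨y, hy, i, i, (hsub y hy i i).symm⟩
  rintro _ ⟨y, hy, i, j, rfl⟩
  rwa [hsub y hy]

theorem poly_zero_eq_W_of_mem {t : ℚ} {s : α → ℚ} (hs : s ∈ poly t 0) : poly t 0 = W α := by
  ext s'
  simpa [poly] using fun _ => hs.2.trans (by simp)

theorem exists_mem_poly_one_forall_mem_iff_eq_W [Nonempty α] {P : Set (Set (α → ℚ))}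
    (hP : P.Finite) (hPo : P ⊆ Po α) (t : ℚ) :
    ∃ s ∈ poly t (fun _ => 1), ∀ y ∈ P, s ∈ y ↔ y = W α := by
  choose! c r hy hr using fun y (hy : y ∈ P) => exists_eq_poly_of_mem_Po (hPo hy)
  let ι := {y // y ∈ P ∧ r y ≠ 0}
  have : Finite ι := hP.subset (Set.sep_subset P fun y => r y ≠ 0)
  have hsurj : Function.Surjective (linearCombination ℚ fun _ : α => (1 : ℚ)) := fun q => by
    obtain ⟨k⟩ := ‹Nonempty α›
    exact ⟨Finsupp.single k q, by simp⟩
  have hker : ∀ y : ι, ∃ d ∈ LinearMap.ker (linearCombination ℚ fun _ : α => (1 : ℚ)),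
      linearCombination ℚ (r y) d ≠ 0 := fun ⟨y, hyP, hy0⟩ => by
    obtain ⟨i, j, hij⟩ := (hr y hyP).resolve_left hy0
    exact exists_mem_ker_linearCombination_one_of_ne hij
  obtain ⟨f, hf, hne⟩ := exists_apply_eq_forall_apply_ne _ hsurj _ hker t fun y => c y
  refine ⟨f, coe_mem_poly_iff.2 hf, fun y hyP => ⟨fun hfy => ?_, fun h => h ▸ coe_mem_W f⟩⟩
  have hf_poly : ⇑f ∈ poly (c y) (r y) := hy y hyP ▸ hfy
  by_cases hy0 : r y = 0
  · rw [hy0] at hf_poly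
    exact (hy y hyP).trans (hy0 ▸ poly_zero_eq_W_of_mem hf_poly)
  · exact absurd (coe_mem_poly_iff.1 hf_poly) (hne ⟨y, hyP, hy0⟩)

end Hyperplanes

section SumPreimage

variable {α : Type*} {Y : Set (Set (α → ℚ))} {A : Set ℚ}

/-- The points of `V` whose coordinate sum lies in `A`, i.e. the union of the hyperplanes `[t, 1]`
with `t ∈ A`. -/
def sumPreimage (α : Type*) (A : Set ℚ) : Set (α → ℚ) := {s | s ∈ W α ∧ ∑ᶠ i, s i ∈ A}

theorem mem_poly_one_iff {t : ℚ} {s : α → ℚ} :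
    s ∈ poly t (fun _ => 1) ↔ s ∈ W α ∧ ∑ᶠ i, s i = t := by
  simp only [poly, one_mul, Set.mem_ofPred_eq, eq_comm]

theorem poly_one_eq_sumPreimage (t : ℚ) : (poly t fun _ => 1) = sumPreimage α {t} :=
  Set.ext fun _ => mem_poly_one_iff

theorem exists_eq_sumPreimage_of_mem_dstar_Pof {x : Set (α → ℚ)} (hx : x ∈ dstar (Pof α)) :
    ∃ A, x = sumPreimage α A := by
  refine ⟨(fun s => ∑ᶠ i, s i) '' x, Set.Subset.antisymm
    (fun s hs => ⟨subset_W_of_mem_dstar hx hs, s, hs, rfl⟩) ?_⟩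
  rintro s ⟨hsW, s', hs', hsum : ∑ᶠ i, s' i = ∑ᶠ i, s i⟩
  refine (determinedBy_of_mem_dstar hx hsW (subset_W_of_mem_dstar hx hs') ?_).2 hs'
  rintro _ ⟨t, rfl⟩
  simp only [mem_poly_one_iff, hsW, subset_W_of_mem_dstar hx hs', hsum]

theorem sumPreimage_compl (A : Set ℚ) : sumPreimage α Aᶜ = W α \ sumPreimage α A := by
  ext s
  simp +contextual [sumPreimage]

theorem sumPreimage_eq_iUnion (A : Set ℚ) :
    sumPreimage α A = ⋃ t : A, poly (t : ℚ) fun _ => 1 := by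
  ext s
  simp [mem_poly_one_iff, sumPreimage]

theorem sumPreimage_mem_dstar {T : Set ℚ} (hT : T.Finite)
    (hTY : ∀ t ∈ T, (poly t fun _ => 1) ∈ Y) (hA : A = T ∨ A = Tᶜ) :
    sumPreimage α A ∈ dstar Y := by
  have := hT.to_subtype
  rcases hA with rfl | rfl
  · rw [sumPreimage_eq_iUnion]
    exact iUnion_mem_dstar fun t => mem_star_of_mem (hTY t t.2) fun s hs => hs.1
  · rw [sumPreimage_compl, sumPreimage_eq_iUnion]
    exact star_subset_dstar (diff_iUnion_mem_star fun t => hTY t t.2)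

theorem poly_one_injective [Nonempty α] :
    Function.Injective fun t : ℚ => (poly t fun _ => 1 : Set (α → ℚ)) := by
  intro a b (hab : poly a _ = poly b _)
  obtain ⟨s, hs, -⟩ := exists_mem_poly_one_forall_mem_iff_eq_W Set.finite_empty
    (Set.empty_subset (Po α)) a
  exact (mem_poly_one_iff.1 hs).2.symm.trans (mem_poly_one_iff.1 (hab ▸ hs)).2

theorem exists_finite_of_sumPreimage_mem_dstar_union_Po [Nonempty α] (hY : Y ⊆ Pof α)
    (hA : sumPreimage α A ∈ dstar (Y ∪ Po α)) :
    ∃ T : Set ℚ, T.Finite ∧ (∀ t ∈ T, (poly t fun _ => 1) ∈ Y) ∧ (A = T ∨ A = Tᶜ) := by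
  obtain ⟨F, hFX, hF, hdet⟩ := exists_finite_determinedBy_of_mem_dstar hA
  set N : Set ℚ := {t | (poly t fun _ => 1) ∈ F ∩ Y}
  have hNfin : N.Finite := (hF.inter_of_left Y).preimage poly_one_injective.injOn
  have hconst : ∀ t ∉ N, ∀ t' ∉ N, t ∈ A ↔ t' ∈ A := by
    intro t ht t' ht'
    obtain ⟨s, hs, hsF⟩ := exists_mem_poly_one_forall_mem_iff_eq_W
      (hF.inter_of_left (Po α)) Set.inter_subset_right t
    obtain ⟨s', hs', hsF'⟩ := exists_mem_poly_one_forall_mem_iff_eq_W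
      (hF.inter_of_left (Po α)) Set.inter_subset_right t'
    rw [mem_poly_one_iff] at hs hs'
    have hagree : ∀ y ∈ F, s ∈ y ↔ s' ∈ y := fun y hyF => by
      rcases hFX hyF with hyY | hyP
      · obtain ⟨u, rfl⟩ := hY hyY
        have hut : t ≠ u := fun h => ht (h ▸ ⟨hyF, hyY⟩)
        have hut' : t' ≠ u := fun h => ht' (h ▸ ⟨hyF, hyY⟩)
        simp only [mem_poly_one_iff, hs, hs', hut, hut']
      · rw [hsF y ⟨hyF, hyP⟩, hsF' y ⟨hyF, hyP⟩]
    simpa only [sumPreimage, Set.mem_ofPred_eq, hs, hs', true_and] using hdet hs.1 hs'.1 hagree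
  have hsub : A ⊆ N ∨ Aᶜ ⊆ N := by
    by_contra! h
    obtain ⟨⟨t, ht, htN⟩, t', ht', htN'⟩ := h.imp Set.not_subset.1 Set.not_subset.1
    exact ht' ((hconst t htN t' htN').1 ht)
  rcases hsub with h | h
  · exact ⟨A, hNfin.subset h, fun t ht => (h ht).2, Or.inl rfl⟩
  · exact ⟨Aᶜ, hNfin.subset h, fun t ht => (h ht).2, Or.inr (compl_compl A).symm⟩

end SumPreimage

end QPEA

theorem stmt7_general {α : Type*} [Nonempty α] (Y : Set (Set (α → ℚ))) (hY : Y ⊆ Pof α) :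
    G Y ∩ Pof α = sClose Y ∧ G Y ∩ dstar (Pof α) = dstar (sClose Y) := by
  rw [G, sClose_eq_self hY]
  refine ⟨Set.Subset.antisymm ?_ fun y hy => ⟨dstar_mono Set.subset_union_left ?_, hY hy⟩,
    Set.Subset.antisymm ?_ (Set.subset_inter (dstar_mono Set.subset_union_left) (dstar_mono hY))⟩
  · rintro _ ⟨hG, t, rfl⟩
    rw [poly_one_eq_sumPreimage] at hG
    obtain ⟨T, hT, hTY, htT | htT⟩ := exists_finite_of_sumPreimage_mem_dstar_union_Po hY hG
    · exact hTY t (htT ▸ rfl)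
    · exact absurd (Set.finite_singleton t) (htT ▸ hT.infinite_compl)
  · obtain ⟨t, rfl⟩ := hY hy
    exact star_subset_dstar (mem_star_of_mem hy fun s hs => hs.1)
  · rintro x ⟨hG, hx⟩
    obtain ⟨A, rfl⟩ := exists_eq_sumPreimage_of_mem_dstar_Pof hx
    obtain ⟨T, hT, hTY, hA⟩ := exists_finite_of_sumPreimage_mem_dstar_union_Po hY hG
    exact sumPreimage_mem_dstar hT hTY hA

/-- For every subset `Y` of `Pof`: `G(Y) ∩ Pof = Y^S` and
`G(Y) ∩ Pof** = (Y^S)**`. -/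
theorem stmt7 {α : Type*} [Infinite α] (Y : Set (Set (α → ℚ))) (hY : Y ⊆ Pof α) :
    G Y ∩ Pof α = sClose Y ∧ G Y ∩ dstar (Pof α) = dstar (sClose Y) :=
  stmt7_general Y hY
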